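/- Let φ be an upper semi-continuous function on a bounded domain U × D ⊂ ℂ^{n−k} × ℂᵏ such that e^{−φ} is locally integrable on U × D (i.e., I(φ) = O). Then for almost every z'' ∈ D the following holds: for every relatively compact open subset V ⋐ U and every nonnegative continuous function P on cl(V) × D, one has ∫_V P(w',z'') e^{−φ(w',z'')} dλ_{n−k}(w') < ∞, and lim_{ε→0} (1/λ_k(B(z'',ε))) ∫_{B(z'',ε)} ∫_V P(w',w'') |e^{−φ(w',w'')} − e^{−φ(w',z'')}| dλ_{n−k}(w') dλ_k(w'') = 0. -/

import Mathlib

open MeasureTheory Metric ENNReal Filter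

/-- Absolute difference on `ℝ≥0∞`. -/
noncomputable def eabs (a b : ℝ≥0∞) : ℝ≥0∞ := (a - b) + (b - a)

lemma eabs_tri (a b c : ℝ≥0∞) : eabs a c ≤ eabs a b + eabs c b := by
  unfold eabs
  calc (a - c) + (c - a) ≤ ((a - b) + (b - c)) + ((c - b) + (b - a)) :=
        add_le_add tsub_le_tsub_add_tsub tsub_le_tsub_add_tsub
    _ = _ := by ring

lemma eabs_le_add (a b : ℝ≥0∞) : eabs a b ≤ a + b :=
  add_le_add tsub_le_self tsub_le_self

lemma eabs_ofReal (a b : ℝ) : eabs (ENNReal.ofReal a) (ENNReal.ofReal b) ≤ edist a b := by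
  wlog h : a ≤ b generalizing a b
  · have := this b a (le_of_not_ge h)
    rw [edist_comm]
    simpa [eabs, add_comm] using this
  · unfold eabs
    rw [tsub_eq_zero_of_le (ENNReal.ofReal_le_ofReal h), zero_add, edist_dist, Real.dist_eq,
      abs_sub_comm, abs_of_nonneg (sub_nonneg.2 h), tsub_le_iff_right]
    calc ENNReal.ofReal b = ENNReal.ofReal ((b - a) + a) := by ring_nf
      _ ≤ _ := ENNReal.ofReal_add_le

/-- A countable family dense in `L¹`. -/
lemma exists_dense_family {X : Type*} [MeasurableSpace X] [MeasurableSpace.CountablyGenerated X]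
    (μ : Measure X) [SFinite μ] :
    ∃ G : ℕ → X → ℝ≥0∞, (∀ i, Measurable (G i)) ∧ (∀ i, ∫⁻ x, G i x ∂μ ≠ ⊤) ∧
      ∀ h : X → ℝ≥0∞, Measurable h → ∫⁻ x, h x ∂μ ≠ ⊤ → ∀ δ : ℝ≥0∞, 0 < δ →
        ∃ i, ∫⁻ x, eabs (h x) (G i x) ∂μ < δ := by
  have : Fact ((1 : ℝ≥0∞) ≠ ⊤) := ⟨ENNReal.one_ne_top⟩
  let u := TopologicalSpace.denseSeq (Lp ℝ 1 μ)
  refine ⟨fun i x => ENNReal.ofReal (u i x), fun i => ?_, fun i => ?_, fun h hm hfin δ hδ => ?_⟩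
  · exact (Lp.stronglyMeasurable (u i)).measurable.ennreal_ofReal
  · have := (L1.integrable_coeFn (u i)).2
    refine ne_top_of_le_ne_top this.ne (lintegral_mono fun x => ?_)
    exact Real.ofReal_le_enorm _
  · have hint : Integrable (fun x => (h x).toReal) μ :=
      integrable_toReal_of_lintegral_ne_top hm.aemeasurable hfin
    obtain ⟨i, hi⟩ := (TopologicalSpace.denseRange_denseSeq (Lp ℝ 1 μ)).exists_mem_open
      (Metric.isOpen_eball (x := hint.toL1 _) (ε := δ)) ⟨_, Metric.mem_eball_self hδ⟩
    refine ⟨i, lt_of_le_of_lt ?_ hi⟩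
    rw [edist_comm, L1.edist_def]
    refine lintegral_mono_ae ?_
    filter_upwards [ae_lt_top hm hfin, hint.coeFn_toL1] with x hx hx2
    rw [hx2]
    conv_lhs => rw [← ENNReal.ofReal_toReal hx.ne]
    exact eabs_ofReal _ _

lemma measurable_eabs {X : Type*} [MeasurableSpace X] {f g : X → ℝ≥0∞} (hf : Measurable f)
    (hg : Measurable g) : Measurable (fun x => eabs (f x) (g x)) :=
  (hf.sub hg).add (hg.sub hf)

lemma ball_ae_closedBall {m : ℕ} (z : EuclideanSpace ℝ (Fin m)) {ε : ℝ} (hε : 0 < ε) :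
    (ball z ε : Set _) =ᵐ[volume] closedBall z ε := by
  rw [← ball_union_sphere]
  refine (union_ae_eq_left_of_ae_eq_empty ?_).symm
  exact ae_eq_empty.2 (Measure.addHaar_sphere_of_ne_zero _ _ hε.ne')

/-- Lebesgue points of an `L¹`-valued map. -/
lemma fiber_lebesgue {m : ℕ} {X : Type*} [MeasurableSpace X]
    [MeasurableSpace.CountablyGenerated X]
    (μ : Measure X) [SFinite μ] (C : Set (EuclideanSpace ℝ (Fin m))) (hC : IsOpen C)
    (hCv : volume C ≠ ⊤) (g : X × EuclideanSpace ℝ (Fin m) → ℝ≥0∞) (hg : Measurable g)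
    (hfin : ∫⁻ p, g p ∂(μ.prod (volume.restrict C)) ≠ ⊤) :
    ∀ᵐ z ∂(volume.restrict C), ∫⁻ x, g (x, z) ∂μ < ⊤ ∧
      Tendsto (fun ε : ℝ => (volume (ball z ε))⁻¹ *
        ∫⁻ w in ball z ε, ∫⁻ x, eabs (g (x, w)) (g (x, z)) ∂μ) (nhdsWithin 0 (Set.Ioi 0))
        (nhds 0) := by
  obtain ⟨G, hGm, hGf, hGd⟩ := exists_dense_family μ
  have hgs : Measurable fun w => ∫⁻ x, g (x, w) ∂μ := hg.lintegral_prod_left'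
  have hgf : ∫⁻ w in C, ∫⁻ x, g (x, w) ∂μ ≠ ⊤ := by
    rwa [← lintegral_prod_symm _ hg.aemeasurable]
  let H : ℕ → EuclideanSpace ℝ (Fin m) → ℝ≥0∞ := fun i w => ∫⁻ x, eabs (g (x, w)) (G i x) ∂μ
  have hHm : ∀ i, Measurable (H i) := fun i =>
    (measurable_eabs hg ((hGm i).comp measurable_fst)).lintegral_prod_left'
  have hHle : ∀ i w, H i w ≤ ∫⁻ x, g (x, w) ∂μ + ∫⁻ x, G i x ∂μ := fun i w => by
    rw [← lintegral_add_right _ (hGm i)]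
    exact lintegral_mono fun x => eabs_le_add _ _
  have hHf : ∀ i, ∫⁻ w, C.indicator (H i) w ≠ ⊤ := fun i => by
    rw [lintegral_indicator hC.measurableSet]
    refine ne_top_of_le_ne_top ?_ (lintegral_mono (hHle i))
    rw [lintegral_add_left hgs, lintegral_const, Measure.restrict_apply_univ]
    exact ENNReal.add_ne_top.2 ⟨hgf, ENNReal.mul_ne_top (hGf i) hCv⟩
  have key : ∀ᵐ z : EuclideanSpace ℝ (Fin m), ∀ i, Tendsto (fun a => (∫⁻ y in a, C.indicator (H i) y) / volume a)
      ((Besicovitch.vitaliFamily volume).filterAt z) (nhds (C.indicator (H i) z)) :=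
    ae_all_iff.2 fun i => (Besicovitch.vitaliFamily volume).ae_tendsto_lintegral_div'
      ((hHm i).indicator hC.measurableSet) (hHf i)
  filter_upwards [ae_lt_top hgs hgf, ae_restrict_of_ae key, ae_restrict_mem hC.measurableSet]
    with z hz1 hz2 hzC
  refine ⟨hz1, ?_⟩
  rw [ENNReal.tendsto_nhds_zero]
  intro δ hδ
  have hδ3 : 0 < δ / 3 := ENNReal.div_pos hδ.ne' (by simp)
  obtain ⟨i, hi⟩ := hGd (fun x => g (x, z)) (hg.comp (measurable_id.prodMk measurable_const))
    hz1.ne (δ / 3) hδ3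
  have hi' : H i z < δ / 3 := hi
  have ht := (hz2 i).comp (Besicovitch.tendsto_filterAt volume z)
  rw [Set.indicator_of_mem hzC] at ht
  obtain ⟨r, hr, hrC⟩ := Metric.isOpen_iff.1 hC z hzC
  filter_upwards [ht.eventually_lt_const hi', Ioo_mem_nhdsGT hr] with ε hε hε2
  have hpos : 0 < ε := hε2.1
  have hsub : ball z ε ⊆ C := (ball_subset_ball hε2.2.le).trans hrC
  have hv0 : volume (ball z ε) ≠ 0 := (measure_ball_pos volume z hpos).ne'
  have hvt : volume (ball z ε) ≠ ⊤ := measure_ball_lt_top.ne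
  simp only [Function.comp] at hε
  rw [← setLIntegral_congr (ball_ae_closedBall z hpos), ← measure_congr (ball_ae_closedBall z hpos),
    setLIntegral_congr_fun measurableSet_ball
      (fun w hw => Set.indicator_of_mem (hsub hw) (H i))] at hε
  calc _ ≤ (volume (ball z ε))⁻¹ * ∫⁻ w in ball z ε, (H i w + H i z) := by
        gcongr with w
        rw [← lintegral_add_left]
        · exact lintegral_mono fun x => eabs_tri _ _ _
        · exact measurable_eabs (hg.comp (measurable_id.prodMk measurable_const)) (hGm i)
    _ = (∫⁻ w in ball z ε, H i w) / volume (ball z ε) + H i z := by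
        rw [lintegral_add_left (hHm i), lintegral_const, Measure.restrict_apply_univ, mul_add,
          mul_comm (H i z), ← mul_assoc, ENNReal.inv_mul_cancel hv0 hvt, one_mul, mul_comm,
          div_eq_mul_inv]
    _ ≤ δ / 3 + δ / 3 := add_le_add hε.le hi'.le
    _ ≤ δ / 3 + δ / 3 + δ / 3 := le_self_add
    _ = δ := ENNReal.add_thirds δ

lemma lintegral_lt_top_of_compact {Z : Type*} [TopologicalSpace Z] [MeasurableSpace Z]
    (ν : Measure Z) (f : Z → ℝ≥0∞) (S K : Set Z) (hK : IsCompact K) (hKS : K ⊆ S)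
    (h : ∀ p ∈ S, ∃ W ∈ nhds p, ∫⁻ w in W, f w ∂ν < ⊤) : ∫⁻ w in K, f w ∂ν < ⊤ := by
  refine hK.induction_on (p := fun s => ∫⁻ w in s, f w ∂ν < ⊤) (by simp) ?_ ?_ ?_
  · exact fun s t hst ht => (lintegral_mono_set hst).trans_lt ht
  · exact fun s t hs ht => (lintegral_union_le _ _ _).trans_lt (ENNReal.add_lt_top.2 ⟨hs, ht⟩)
  · intro x hx
    obtain ⟨W, hW, hWf⟩ := h x (hKS hx)
    exact ⟨W, mem_nhdsWithin_of_mem_nhds hW, hWf⟩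

/-- A countable compact exhaustion of a bounded open set. -/
lemma exists_exhaustion {m : ℕ} (U : Set (EuclideanSpace ℝ (Fin m))) (hU : IsOpen U)
    (hUb : Bornology.IsBounded U) :
    ∃ K : ℕ → Set (EuclideanSpace ℝ (Fin m)), (∀ j, IsCompact (K j)) ∧ (∀ j, K j ⊆ U) ∧
      ∀ L, IsCompact L → L ⊆ U → ∃ j, L ⊆ K j := by
  have hsub : ∀ j : ℕ, {x | ((j : ℝ≥0∞))⁻¹ ≤ infEDist x Uᶜ} ⊆ U := by
    intro j x hx
    by_contra hxU
    have : infEDist x Uᶜ = 0 := infEDist_zero_of_mem hxU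
    simp [this] at hx
  refine ⟨fun j => {x | ((j : ℝ≥0∞))⁻¹ ≤ infEDist x Uᶜ}, fun j => ?_, hsub, fun L hL hLU => ?_⟩
  · exact Metric.isCompact_of_isClosed_isBounded
      (isClosed_le continuous_const continuous_infEDist) (hUb.subset (hsub j))
  · obtain ⟨δ, hδ, hδU⟩ := hL.exists_thickening_subset_open hU hLU
    obtain ⟨j, hj⟩ := ENNReal.exists_inv_nat_lt (ENNReal.ofReal_pos.2 hδ).ne'
    refine ⟨j, fun x hx => hj.le.trans ?_⟩
    refine le_infEDist.2 fun y hy => ?_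
    by_contra hlt
    refine hy (hδU ?_)
    rw [mem_thickening_iff_exists_edist_lt]
    exact ⟨x, hx, by rw [edist_comm]; exact not_le.1 hlt⟩

lemma measurable_weight {Z : Type*} [TopologicalSpace Z] [MeasurableSpace Z]
    [OpensMeasurableSpace Z] (S : Set Z) (hS : MeasurableSet S) (φ : Z → EReal)
    (h : UpperSemicontinuousOn φ S) :
    Measurable (S.indicator fun p => EReal.exp (-(φ p))) := by
  have h1 := (upperSemicontinuousOn_iff_restrict.2 h).measurable
  refine measurable_of_restrict_of_restrict_compl hS ?_ ?_
  · convert! EReal.measurable_exp.comp (measurable_neg.comp h1) using 1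
    funext x
    exact Set.indicator_of_mem x.2 _
  · convert! (measurable_const : Measurable fun _ : (Sᶜ : Set Z) => (0 : ℝ≥0∞)) using 1
    funext x
    exact Set.indicator_of_notMem x.2 _



/-- **Siu-type lemma.** Let `φ` be an upper semi-continuous `[−∞,∞)`-valued function on a
bounded domain `U × D ⊂ ℂ^{n−k} × ℂᵏ` (identifying `ℂᵐ ≅ ℝ^{2m}`) such that `e^{−φ}` is
locally integrable on `U × D` (i.e. `I(φ) = O`). Then for almost every `z'' ∈ D`: for
every relatively compact open `V ⋐ U` and every nonnegative continuous `P` on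
`cl(V) × D`, `∫_V P(w',z'') e^{−φ(w',z'')} dλ(w') < ∞` and
`lim_{ε→0} (1/λ(B(z'',ε))) ∫_{B(z'',ε)} ∫_V P(w',w'') |e^{−φ(w',w'')} − e^{−φ(w',z'')}| = 0`. -/
theorem siu_type_lemma (n k : ℕ) (hk : 1 ≤ k) (hkn : k ≤ n)
    (U : Set (EuclideanSpace ℝ (Fin (2 * (n - k)))))
    (D : Set (EuclideanSpace ℝ (Fin (2 * k))))
    (hU : IsOpen U) (hD : IsOpen D)
    (hUb : Bornology.IsBounded U) (hDb : Bornology.IsBounded D)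
    (φ : EuclideanSpace ℝ (Fin (2 * (n - k))) × EuclideanSpace ℝ (Fin (2 * k)) → EReal)
    (hφtop : ∀ p, φ p < ⊤)
    (hφusc : UpperSemicontinuousOn φ (U ×ˢ D))
    (hloc : ∀ p ∈ U ×ˢ D, ∃ W ∈ nhds p, (∫⁻ w in W, EReal.exp (-(φ w)) ∂volume) < ⊤) :
    ∀ᵐ z'' ∂(volume.restrict D),
      ∀ V : Set (EuclideanSpace ℝ (Fin (2 * (n - k)))),
        IsOpen V → closure V ⊆ U → IsCompact (closure V) →
        ∀ P : EuclideanSpace ℝ (Fin (2 * (n - k))) × EuclideanSpace ℝ (Fin (2 * k)) → ℝ,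
          ContinuousOn P (closure V ×ˢ D) → (∀ p ∈ closure V ×ˢ D, 0 ≤ P p) →
          ((∫⁻ w' in V, ENNReal.ofReal (P (w', z'')) * EReal.exp (-(φ (w', z''))) ∂volume) < ⊤ ∧
           Tendsto (fun ε : ℝ =>
              (volume (ball z'' ε))⁻¹ *
                ∫⁻ w'' in ball z'' ε,
                  ∫⁻ w' in V, ENNReal.ofReal (P (w', w'')) *
                    ((EReal.exp (-(φ (w', w''))) - EReal.exp (-(φ (w', z'')))) +
                     (EReal.exp (-(φ (w', z''))) - EReal.exp (-(φ (w', w''))))) ∂volume ∂volume)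
            (nhdsWithin 0 (Set.Ioi 0)) (nhds 0)) := by
  obtain ⟨K, hKc, hKU, hKex⟩ := exists_exhaustion U hU hUb
  have hUD : MeasurableSet (U ×ˢ D) := (hU.prod hD).measurableSet
  set g := (U ×ˢ D).indicator fun p => EReal.exp (-(φ p)) with hgdef
  have hg : Measurable g := measurable_weight _ hUD φ hφusc
  have hgeq : ∀ x ∈ U, ∀ y ∈ D, g (x, y) = EReal.exp (-(φ (x, y))) := fun x hx y hy =>
    Set.indicator_of_mem (Set.mk_mem_prod hx hy) _
  -- Lebesgue points for all members of the exhaustion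
  have main : ∀ᵐ z ∂(volume.restrict D), ∀ j, ∫⁻ x in K j, g (x, z) < ⊤ ∧
      Tendsto (fun ε : ℝ => (volume (ball z ε))⁻¹ *
        ∫⁻ w in ball z ε, ∫⁻ x in K j, eabs (g (x, w)) (g (x, z))) (nhdsWithin 0 (Set.Ioi 0))
        (nhds 0) := by
    refine ae_all_iff.2 fun j => ?_
    rw [ae_restrict_iff'₀ hD.measurableSet.nullMeasurableSet, ae_iff]
    refine measure_null_of_locally_null _ fun y hy => ?_
    simp only [Set.mem_ofPred_eq, Classical.not_imp] at hy
    obtain ⟨r, hr, hrD⟩ := Metric.nhds_basis_closedBall.mem_iff.1 (hD.mem_nhds hy.1)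
    refine ⟨_, inter_mem_nhdsWithin _ (ball_mem_nhds y hr), ?_⟩
    have hfin : ∫⁻ p, g p ∂((volume.restrict (K j)).prod (volume.restrict (ball y r))) ≠ ⊤ := by
      rw [Measure.prod_restrict, ← Measure.volume_eq_prod]
      refine ((lintegral_mono_set (Set.prod_mono_right ball_subset_closedBall)).trans_lt ?_).ne
      refine (lintegral_mono (Set.indicator_le_self _ _)).trans_lt ?_
      exact lintegral_lt_top_of_compact volume _ (U ×ˢ D) _
        ((hKc j).prod (isCompact_closedBall y r)) (Set.prod_mono (hKU j) hrD) hloc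
    have := fiber_lebesgue (volume.restrict (K j)) (ball y r) isOpen_ball measure_ball_lt_top.ne
      g hg hfin
    rw [ae_restrict_iff'₀ measurableSet_ball.nullMeasurableSet, ae_iff] at this
    refine measure_mono_null (fun z hz => ?_) this
    simp only [Set.mem_ofPred_eq, Classical.not_imp, Set.mem_inter_iff] at hz ⊢
    exact ⟨hz.2, hz.1.2⟩
  filter_upwards [main, ae_restrict_mem hD.measurableSet] with z hz hzD
  intro V hV hVU hVc P hP hP0
  obtain ⟨j, hj⟩ := hKex _ hVc hVU
  obtain ⟨hz1, hz2⟩ := hz j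
  have hVK : V ⊆ K j := subset_closure.trans hj
  obtain ⟨r, hr, hrD⟩ := Metric.nhds_basis_closedBall.mem_iff.1 (hD.mem_nhds hzD)
  obtain ⟨M, hM⟩ := (hVc.prod (isCompact_closedBall z r)).bddAbove_image
    (hP.mono (Set.prod_mono_right hrD))
  have hPM : ∀ x ∈ V, ∀ y ∈ closedBall z r, ENNReal.ofReal (P (x, y)) ≤ ENNReal.ofReal M :=
    fun x hx y hy => ENNReal.ofReal_le_ofReal
      (hM (Set.mem_image_of_mem _ (Set.mk_mem_prod (subset_closure hx) hy)))
  constructor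
  · calc _ ≤ ∫⁻ x in V, ENNReal.ofReal M * g (x, z) := by
          refine setLIntegral_mono' hV.measurableSet fun x hx => ?_
          rw [hgeq x (hKU j (hVK hx)) z hzD]
          exact mul_le_mul' (hPM x hx z (mem_closedBall_self hr.le)) le_rfl
      _ = ENNReal.ofReal M * ∫⁻ x in V, g (x, z) := lintegral_const_mul' _ _ ENNReal.ofReal_ne_top
      _ ≤ ENNReal.ofReal M * ∫⁻ x in K j, g (x, z) := by
          gcongr
      _ < ⊤ := ENNReal.mul_lt_top ENNReal.ofReal_lt_top hz1
  · have hlim := ENNReal.Tendsto.const_mul (a := ENNReal.ofReal M) hz2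
      (Or.inr ENNReal.ofReal_ne_top)
    rw [mul_zero] at hlim
    refine tendsto_of_tendsto_of_tendsto_of_le_of_le' tendsto_const_nhds hlim
      (Eventually.of_forall fun _ => zero_le) ?_
    filter_upwards [Ioo_mem_nhdsGT hr] with ε hε
    rw [mul_left_comm, ← lintegral_const_mul' _ _ ENNReal.ofReal_ne_top]
    refine mul_le_mul' le_rfl ?_
    refine setLIntegral_mono' measurableSet_ball fun w hw => ?_
    have hwr : w ∈ closedBall z r := ball_subset_closedBall (ball_subset_ball hε.2.le hw)
    rw [← lintegral_const_mul' _ _ ENNReal.ofReal_ne_top]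
    refine le_trans ?_ (lintegral_mono_set hVK)
    refine setLIntegral_mono' hV.measurableSet fun x hx => ?_
    rw [hgeq x (hKU j (hVK hx)) z hzD, hgeq x (hKU j (hVK hx)) w (hrD hwr)]
    exact mul_le_mul' (hPM x hx w hwr) le_rfl
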